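/- arXiv:1004.3264 — 3 statements merged into one kernel-verified Lean document; each statement's English description precedes it below -/
import Mathlib

section
/- Let 𝔥 = 𝔤 ⋉_γ V be the semidirect product of a finite-dimensional real Lie algebra 𝔤 and a vector space V along a Lie algebra homomorphism γ : 𝔤 → End(V), and let J be an integrable almost complex structure on 𝔥 such that J maps 𝔤 × {0} onto {0} × V and {0} × V onto 𝔤 × {0} (totally real). On the dual semidirect product 𝔥̂ = 𝔤 ⋉_{γ*} V* define Ω̂((x,μ),(y,ν)) := ν(Jx) − μ(Jy), where Jx, Jy denote the V-components of J(x,0), J(y,0). Then Ω̂ is a closed nondegenerate alternating 2-form on 𝔥̂ and both 𝔤 × {0} and {0} × V* are isotropic for Ω̂. -/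
/-!
Write `j x = (J (x, 0)).2`; total reality makes `j : 𝔤 → V` a linear isomorphism. Integrability of
`J` on `𝔤 × {0}` says exactly that `j` is a `1`-cocycle for `γ`, i.e.
`j ⁅x, y⁆ = γ x (j y) - γ y (j x)` (lemma `totallyReal_cocycle`). In the cyclic sum for `dΩ̂` the terms
containing a given covector are that covector evaluated on the cocycle defect, so they cancel.
Nondegeneracy is injectivity and surjectivity of `j`, both of which follow from `J² = -1`.
-/

/-- The semidirect product bracket on `𝔤 × V` along a representation
`γ : 𝔤 → End(V)`: `[(x,u),(y,v)] = ([x,y], γ(x)v − γ(y)u)`. -/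
def sdBracket {𝔤 V : Type*} [LieRing 𝔤] [LieAlgebra ℝ 𝔤]
    [AddCommGroup V] [Module ℝ V]
    (γ : 𝔤 →ₗ[ℝ] Module.End ℝ V) (a b : 𝔤 × V) : 𝔤 × V :=
  (⁅a.1, b.1⁆, γ a.1 b.2 - γ b.1 a.2)

/-- The dual semidirect product bracket on `𝔤 × V*` along the dual
representation `γ*`, where `(γ*(x)μ)(v) = −μ(γ(x)v)`. -/
def sdDualBracket {𝔤 V : Type*} [LieRing 𝔤] [LieAlgebra ℝ 𝔤]
    [AddCommGroup V] [Module ℝ V]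
    (γ : 𝔤 →ₗ[ℝ] Module.End ℝ V) (a b : 𝔤 × Module.Dual ℝ V) :
    𝔤 × Module.Dual ℝ V :=
  (⁅a.1, b.1⁆, -(b.2 ∘ₗ γ a.1) + a.2 ∘ₗ γ b.1)

/-- Integrability of a totally real `J` on `𝔤 × {0}` forces `x ↦ (J (x, 0)).2` to be a `1`-cocycle of
`𝔤` with values in `V`. -/
lemma totallyReal_cocycle {𝔤 V : Type*} [LieRing 𝔤] [LieAlgebra ℝ 𝔤]
    [AddCommGroup V] [Module ℝ V]
    (γ : 𝔤 →ₗ[ℝ] Module.End ℝ V)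
    (J : (𝔤 × V) →ₗ[ℝ] 𝔤 × V) (hJ : ∀ a, J (J a) = -a)
    (hint : ∀ a b, sdBracket γ (J a) (J b) =
      sdBracket γ a b + J (sdBracket γ (J a) b) + J (sdBracket γ a (J b)))
    (htr1 : ∀ x : 𝔤, (J (x, 0)).1 = 0) (x y : 𝔤) :
    (J (⁅x, y⁆, 0)).2 = γ x (J (y, 0)).2 - γ y (J (x, 0)).2 := by
  have h := hint (x, 0) (y, 0)
  simp only [sdBracket, htr1, map_zero, LinearMap.zero_apply, sub_zero, lie_zero, zero_lie,
    zero_sub] at h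
  -- `h` reads `0 = (⁅x, y⁆, 0) + J (0, -γ y (j x)) + J (0, γ x (j y))`; apply `J` to it.
  have h2 := congrArg (fun z => (J z).2) h
  simp only [map_add, hJ] at h2
  have h3 : (J ((0 : 𝔤), (0 : V))).2 = 0 := by
    rw [← Prod.zero_eq_mk, map_zero, Prod.snd_zero]
  simp only [h3, Prod.snd_add, Prod.snd_neg, neg_neg] at h2
  refine sub_eq_zero.mp (Eq.trans ?_ h2.symm)
  abel

/-- Let `𝔥 = 𝔤 ⋉_γ V` and let `J` be an integrable almost complex
structure on `𝔥` which is totally real (it interchanges `𝔤 × {0}` and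
`{0} × V`). On the dual semidirect product `𝔥̂ = 𝔤 ⋉_{γ*} V*` the 2-form
`Ω̂((x,μ),(y,ν)) := ν(Jx) − μ(Jy)` is closed, nondegenerate and alternating, and
both `𝔤 × {0}` and `{0} × V*` are isotropic for `Ω̂`. -/
theorem stmt12 {𝔤 V : Type*} [LieRing 𝔤] [LieAlgebra ℝ 𝔤] [FiniteDimensional ℝ 𝔤]
    [AddCommGroup V] [Module ℝ V] [FiniteDimensional ℝ V]
    (γ : 𝔤 →ₗ[ℝ] Module.End ℝ V)
    (hflat : ∀ x y, γ ⁅x, y⁆ = γ x * γ y - γ y * γ x)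
    (J : (𝔤 × V) →ₗ[ℝ] 𝔤 × V) (hJ : ∀ a, J (J a) = -a)
    (hint : ∀ a b, sdBracket γ (J a) (J b) =
      sdBracket γ a b + J (sdBracket γ (J a) b) + J (sdBracket γ a (J b)))
    (htr1 : ∀ x : 𝔤, (J (x, 0)).1 = 0)
    (htr2 : ∀ u : V, (J (0, u)).2 = 0)
    (Ωhat : (𝔤 × Module.Dual ℝ V) → (𝔤 × Module.Dual ℝ V) → ℝ)
    (hΩhat : ∀ a b, Ωhat a b = b.2 ((J (a.1, 0)).2) - a.2 ((J (b.1, 0)).2)) :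
    (∀ a, Ωhat a a = 0) ∧
    (∀ a b c, Ωhat (sdDualBracket γ a b) c + Ωhat (sdDualBracket γ b c) a +
      Ωhat (sdDualBracket γ c a) b = 0) ∧
    (∀ a, (∀ b, Ωhat a b = 0) → a = 0) ∧
    (∀ x y : 𝔤, Ωhat (x, 0) (y, 0) = 0) ∧
    (∀ μ ν : Module.Dual ℝ V, Ωhat (0, μ) (0, ν) = 0) := by
  have hcoc := totallyReal_cocycle γ J hJ hint htr1
  refine ⟨fun a => ?_, fun a b c => ?_, fun a ha => ?_, fun x y => ?_, fun μ ν => ?_⟩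
  · rw [hΩhat, sub_self]
  · simp only [hΩhat, sdDualBracket, hcoc, map_sub, LinearMap.add_apply, LinearMap.neg_apply,
      LinearMap.comp_apply]
    ring
  · obtain ⟨x, μ⟩ := a
    have hx : (J (x, 0)).2 = 0 := by
      rw [← Module.forall_dual_apply_eq_zero_iff ℝ]
      intro ν
      have h := ha (0, ν)
      rw [hΩhat] at h
      simpa [← Prod.zero_eq_mk] using h
    have hx0 : x = 0 := by
      have h := hJ (x, 0)
      rw [show J (x, 0) = 0 from Prod.ext (htr1 x) hx, map_zero] at h
      simpa using (congrArg Prod.fst h).symm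
    have hμ : μ = 0 := by
      ext u
      -- The witness `y = (J (0, u)).1` satisfies `J (y, 0) = J (J (0, u)) = (0, -u)`.
      have h := ha ((J (0, u)).1, 0)
      rw [hΩhat] at h
      have e : ((J (0, u)).1, (0 : V)) = J (0, u) := Prod.ext rfl (htr2 u).symm
      simpa [e, hJ] using h
    rw [hx0, hμ, Prod.zero_eq_mk]
  · simp [hΩhat]
  · simp [hΩhat, ← Prod.zero_eq_mk]
end

section
/- Let 𝔥 = 𝔤 ⋉_γ V be the semidirect product of a finite-dimensional real Lie algebra 𝔤 and a vector space V along a Lie algebra homomorphism γ : 𝔤 → End(V), and let Ω be a closed nondegenerate alternating 2-form on 𝔥 for which 𝔤 × {0} and {0} × V are isotropic. Then the contraction maps Ω♭ : 𝔤 → V*, x ↦ (v ↦ Ω((x,0),(0,v))), and Ω♭ : V → 𝔤*, u ↦ (y ↦ Ω((0,u),(y,0))), are linear isomorphisms, and the map Ĵ on the dual semidirect product 𝔥̂ = 𝔤 ⋉_{γ*} V* defined by Ĵ(x,μ) := (−(Ω♭)⁻¹(μ), Ω♭(x)) satisfies Ĵ ∘ Ĵ = −id, maps 𝔤 × {0}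 onto {0} × V*, and is integrable: [ĴA,ĴB] = [A,B] + Ĵ[ĴA,B] + Ĵ[A,ĴB] for all A, B ∈ 𝔥̂. -/
/-- Closedness of `Ω` on `𝔤 × 𝔤 × V` is the 1-cocycle identity for the contraction
`𝔤 → V*` with values in the dual representation. -/
theorem contraction_cocycle {𝔤 V : Type*} [LieRing 𝔤] [LieAlgebra ℝ 𝔤]
    [AddCommGroup V] [Module ℝ V]
    (γ : 𝔤 →ₗ[ℝ] Module.End ℝ V)
    (Ω : (𝔤 × V) →ₗ[ℝ] (𝔤 × V) →ₗ[ℝ] ℝ)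
    (hskew : ∀ a b, Ω a b = -Ω b a)
    (hclosed : ∀ a b c, Ω (sdBracket γ a b) c + Ω (sdBracket γ b c) a +
      Ω (sdBracket γ c a) b = 0)
    (φ : 𝔤 →ₗ[ℝ] Module.Dual ℝ V)
    (hφ : ∀ (x : 𝔤) (v : V), φ x v = Ω (x, 0) (0, v)) (x y : 𝔤) :
    φ ⁅x, y⁆ = -(φ y ∘ₗ γ x) + φ x ∘ₗ γ y := by
  ext v
  have h := hclosed (x, 0) (y, 0) (0, v)
  simp only [sdBracket, map_zero, sub_zero, zero_sub, lie_zero, zero_lie] at h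
  have e : Ω (0, -(γ x v)) (y, 0) = φ y (γ x v) := by
    rw [hskew, ← hφ, map_neg, neg_neg]
  rw [e, ← hφ, hskew (0, γ y v), ← hφ] at h
  simp only [LinearMap.add_apply, LinearMap.neg_apply, LinearMap.comp_apply]
  linarith

/-- Let `𝔥 = 𝔤 ⋉_γ V` carry a closed nondegenerate alternating
2-form `Ω` for which `𝔤 × {0}` and `{0} × V` are isotropic. Then the
contractions `Ω♭ : 𝔤 → V*` and `Ω♭ : V → 𝔤*` are linear isomorphisms, and the
map `Ĵ(x,μ) := (−(Ω♭)⁻¹(μ), Ω♭(x))` on `𝔥̂ = 𝔤 ⋉_{γ*} V*` satisfies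
`Ĵ² = −id`, maps `𝔤 × {0}` onto `{0} × V*`, and is integrable. -/
theorem stmt13 {𝔤 V : Type*} [LieRing 𝔤] [LieAlgebra ℝ 𝔤] [FiniteDimensional ℝ 𝔤]
    [AddCommGroup V] [Module ℝ V] [FiniteDimensional ℝ V]
    (γ : 𝔤 →ₗ[ℝ] Module.End ℝ V)
    (hflat : ∀ x y, γ ⁅x, y⁆ = γ x * γ y - γ y * γ x)
    (Ω : (𝔤 × V) →ₗ[ℝ] (𝔤 × V) →ₗ[ℝ] ℝ)
    (halt : ∀ a, Ω a a = 0)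
    (hclosed : ∀ a b c, Ω (sdBracket γ a b) c + Ω (sdBracket γ b c) a +
      Ω (sdBracket γ c a) b = 0)
    (hnd : ∀ a, (∀ b, Ω a b = 0) → a = 0)
    (hLag1 : ∀ x y : 𝔤, Ω (x, 0) (y, 0) = 0)
    (hLag2 : ∀ u v : V, Ω (0, u) (0, v) = 0)
    (Ωb₁ : 𝔤 →ₗ[ℝ] Module.Dual ℝ V)
    (hΩb₁ : ∀ (x : 𝔤) (v : V), Ωb₁ x v = Ω (x, 0) (0, v))
    (Ωb₂ : V →ₗ[ℝ] Module.Dual ℝ 𝔤)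
    (hΩb₂ : ∀ (u : V) (y : 𝔤), Ωb₂ u y = Ω (0, u) (y, 0)) :
    Function.Bijective Ωb₁ ∧
    Function.Bijective Ωb₂ ∧
    (∀ Jhat : (𝔤 × Module.Dual ℝ V) → 𝔤 × Module.Dual ℝ V,
      (∀ (x : 𝔤) (μ : Module.Dual ℝ V),
        Ωb₁ (-(Jhat (x, μ)).1) = μ ∧ (Jhat (x, μ)).2 = Ωb₁ x) →
      ((∀ p, Jhat (Jhat p) = -p) ∧
       (∀ x : 𝔤, (Jhat (x, 0)).1 = 0) ∧
       (∀ μ : Module.Dual ℝ V, ∃ x : 𝔤, Jhat (x, 0) = (0, μ)) ∧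
       (∀ a b, sdDualBracket γ (Jhat a) (Jhat b) =
         sdDualBracket γ a b + Jhat (sdDualBracket γ (Jhat a) b) +
           Jhat (sdDualBracket γ a (Jhat b))))) := by
  have hskew : ∀ a b, Ω a b = -Ω b a := fun a b => by
    have h := halt (a + b)
    simp only [map_add, LinearMap.add_apply, halt] at h
    linarith
  have split : ∀ (y : 𝔤) (v : V), ((y, v) : 𝔤 × V) = (y, 0) + (0, v) := fun y v => by simp
  have inj₁ : Function.Injective Ωb₁ := by
    rw [injective_iff_map_eq_zero]
    intro x hx
    refine congrArg Prod.fst (hnd (x, 0) fun ⟨y, v⟩ => ?_)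
    rw [split y v, map_add, hLag1, ← hΩb₁, hx, LinearMap.zero_apply, add_zero]
  have inj₂ : Function.Injective Ωb₂ := by
    rw [injective_iff_map_eq_zero]
    intro u hu
    refine congrArg Prod.snd (hnd (0, u) fun ⟨y, v⟩ => ?_)
    rw [split y v, map_add, hLag2, ← hΩb₂, hu, LinearMap.zero_apply, add_zero]
  have dim_eq : Module.finrank ℝ 𝔤 = Module.finrank ℝ V := by
    apply le_antisymm
    · simpa [Subspace.dual_finrank_eq] using LinearMap.finrank_le_finrank_of_injective inj₁
    · simpa [Subspace.dual_finrank_eq] using LinearMap.finrank_le_finrank_of_injective inj₂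
  have surj₁ : Function.Surjective Ωb₁ :=
    (LinearMap.injective_iff_surjective_of_finrank_eq_finrank
      (by rw [Subspace.dual_finrank_eq, dim_eq])).1 inj₁
  have surj₂ : Function.Surjective Ωb₂ :=
    (LinearMap.injective_iff_surjective_of_finrank_eq_finrank
      (by rw [Subspace.dual_finrank_eq, dim_eq])).1 inj₂
  have coc := contraction_cocycle γ Ω hskew hclosed Ωb₁ hΩb₁
  refine ⟨⟨inj₁, surj₁⟩, ⟨inj₂, surj₂⟩, fun J hJ => ?_⟩
  have key : ∀ x x', J (x, Ωb₁ x') = (-x', Ωb₁ x) := fun x x' => by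
    obtain ⟨h₁, h₂⟩ := hJ x (Ωb₁ x')
    exact Prod.ext (neg_eq_iff_eq_neg.1 (inj₁ h₁)) h₂
  have key0 : ∀ x, J (x, 0) = (0, Ωb₁ x) := fun x => by simpa using key x 0
  refine ⟨?_, fun x => by rw [key0], fun μ => ?_, ?_⟩
  · rintro ⟨x, μ⟩
    obtain ⟨x', rfl⟩ := surj₁ μ
    rw [key, key, map_neg]
    rfl
  · obtain ⟨x, rfl⟩ := surj₁ μ
    exact ⟨x, key0 x⟩
  · rintro ⟨x, μ⟩ ⟨y, ν⟩
    obtain ⟨x', rfl⟩ := surj₁ μ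
    obtain ⟨y', rfl⟩ := surj₁ ν
    rw [key, key]
    simp only [sdDualBracket]
    -- `p` and `q` represent the `V*`-components of `[Ĵa, b]` and `[a, Ĵb]` through `Ω♭`.
    obtain ⟨p, hp⟩ := surj₁ (-(Ωb₁ y' ∘ₗ γ (-x')) + Ωb₁ x ∘ₗ γ y)
    obtain ⟨q, hq⟩ := surj₁ (-(Ωb₁ y ∘ₗ γ x) + Ωb₁ x' ∘ₗ γ (-y'))
    have hpq : p + q = ⁅x, y⁆ - ⁅x', y'⁆ := by
      apply inj₁
      rw [map_add, map_sub, hp, hq, coc, coc, map_neg, map_neg, LinearMap.comp_neg,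
        LinearMap.comp_neg]
      abel
    rw [← hp, ← hq, key, key]
    refine Prod.ext ?_ ?_
    · simp only [Prod.fst_add, neg_lie, lie_neg, neg_neg]
      rw [eq_sub_of_add_eq hpq]
      abel
    · simp only [Prod.snd_add, neg_lie, lie_neg, map_neg, coc, LinearMap.comp_neg]
      abel
end

section
/- Let 𝔥 = 𝔤 ⋉_γ V be a four-dimensional real semidirect product Lie algebra, where 𝔤 is a two-dimensional subalgebra, V a two-dimensional abelian ideal and γ : 𝔤 → End(V) a Lie algebra homomorphism, and suppose 𝔥 is not abelian and carries a special Lagrangian complex symplectic structure (J, Ω). Then there exists a basis f₁, f₂, f₃, f₄ of 𝔥 with f₁, f₂ ∈ 𝔤 and f₃, f₄ ∈ V such that Jf₁ = f₃, Jf₂ = f₄, Ω(f₁,f₄) = −1, Ω(f₂,f₃) = 1, Ω(f₁,f₂) = Ω(f₁,f₃) = Ω(f₂,f₄) = Ω(f₃,f₄) = 0, and the nonzero Lie brackets among basis vectors are exactly one of the following three lists: (i) [f₁,f₃] = f₄; (ii) [f₁,f₂] = f₂, [f₁,f₃] = −f₃, [f₁,f₄] = f₄; (iii) [f₁,f₂]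 = f₂, [f₁,f₃] = −(1/2)f₃, [f₁,f₄] = (1/2)f₄, [f₂,f₃] = −(1/2)f₄. -/
/-- The normal forms of a flat torsion-free product `L` preserving an area form, in a frame
`f₁, f₂`: the three bracket lists expressed through `L`. -/
def IsNormalForm {E : Type*} [AddCommGroup E] [Module ℝ E]
    (L : E →ₗ[ℝ] E →ₗ[ℝ] E) (f₁ f₂ : E) : Prop :=
  (L f₁ f₁ = f₂ ∧ L f₁ f₂ = 0 ∧ L f₂ f₁ = 0 ∧ L f₂ f₂ = 0) ∨
  (L f₁ f₁ = -f₁ ∧ L f₁ f₂ = f₂ ∧ L f₂ f₁ = 0 ∧ L f₂ f₂ = 0) ∨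
  (L f₁ f₁ = -(1 / 2 : ℝ) • f₁ ∧ L f₁ f₂ = (1 / 2 : ℝ) • f₂ ∧
    L f₂ f₁ = -(1 / 2 : ℝ) • f₂ ∧ L f₂ f₂ = 0)

/-! ### Area forms on a plane -/

section Plane

variable {E : Type*} [AddCommGroup E] [Module ℝ E]

theorem area_swap (ω : E →ₗ[ℝ] E →ₗ[ℝ] ℝ) (alt : ∀ x, ω x x = 0) (x y : E) :
    ω y x = - ω x y := by
  have h := alt (x + y)
  simp only [map_add, LinearMap.add_apply, alt] at h
  linarith

/-- Cramer's rule in a plane with an area form. -/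
theorem area_cramer (hE : Module.finrank ℝ E = 2) (ω : E →ₗ[ℝ] E →ₗ[ℝ] ℝ)
    (alt : ∀ x, ω x x = 0) (e f x : E) :
    ω e f • x = ω x f • e + ω e x • f := by
  have : FiniteDimensional ℝ E := Module.finite_of_finrank_eq_succ hE
  let b := Module.finBasisOfFinrankEq ℝ E hE
  have key : ∀ y, ∃ s t : ℝ, y = s • b 0 + t • b 1 := fun y =>
    ⟨b.repr y 0, b.repr y 1, by
      conv_lhs => rw [← b.sum_repr y]
      rw [Fin.sum_univ_two]⟩
  obtain ⟨e1, e2, rfl⟩ := key e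
  obtain ⟨f1, f2, rfl⟩ := key f
  obtain ⟨x1, x2, rfl⟩ := key x
  simp only [map_add, map_smul, LinearMap.add_apply, LinearMap.smul_apply, alt, smul_eq_mul,
    area_swap ω alt (b 0) (b 1)]
  module

/-- A frame is recognised by a nonzero area, and then every vector has coordinates in it. -/
theorem area_coords (hE : Module.finrank ℝ E = 2) (ω : E →ₗ[ℝ] E →ₗ[ℝ] ℝ)
    (alt : ∀ x, ω x x = 0) {e f : E} (h : ω e f ≠ 0) (x : E) :
    ∃ s t : ℝ, x = s • e + t • f := by
  refine ⟨(ω e f)⁻¹ * ω x f, (ω e f)⁻¹ * ω e x, ?_⟩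
  rw [mul_smul, mul_smul, ← smul_add, ← area_cramer hE ω alt, smul_smul, inv_mul_cancel₀ h,
    one_smul]

theorem area_indep (ω : E →ₗ[ℝ] E →ₗ[ℝ] ℝ)
    (alt : ∀ x, ω x x = 0) {e f : E} (h : ω e f ≠ 0) {s t s' t' : ℝ}
    (hst : s • e + t • f = s' • e + t' • f) : s = s' ∧ t = t' := by
  constructor
  · have := congrArg (fun z => ω z f) hst
    simp only [map_add, map_smul, LinearMap.add_apply, LinearMap.smul_apply, alt, smul_eq_mul,
      mul_zero, add_zero] at this
    exact mul_right_cancel₀ h this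
  · have := congrArg (fun z => ω e z) hst
    simp only [map_add, map_smul, alt, smul_eq_mul, mul_zero, zero_add] at this
    exact mul_right_cancel₀ h this

/-- An operator preserving the area form infinitesimally is traceless. -/
theorem area_traceless (ω : E →ₗ[ℝ] E →ₗ[ℝ] ℝ)
    (alt : ∀ x, ω x x = 0) {e f : E} (h : ω e f ≠ 0) (A : E →ₗ[ℝ] E)
    (hA : ω (A e) f + ω e (A f) = 0) {p q r s : ℝ}
    (he : A e = p • e + q • f) (hf : A f = r • e + s • f) : s = -p := by
  rw [he, hf] at hA
  simp only [map_add, map_smul, LinearMap.add_apply, LinearMap.smul_apply, alt, smul_eq_mul] at hA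
  have : (p + s) * ω e f = 0 := by linarith
  rcases mul_eq_zero.1 this with h' | h'
  · linarith
  · exact absurd h' h

/-! ### Flat torsion-free products preserving an area form -/

theorem exists_cube_root (y : ℝ) : ∃ c : ℝ, c ^ 3 = y := by
  have key : ∀ z : ℝ, 0 ≤ z → ∃ c : ℝ, c ^ 3 = z := fun z hz =>
    ⟨z ^ ((3 : ℕ) : ℝ)⁻¹, Real.rpow_inv_natCast_pow hz (by decide)⟩
  rcases le_total 0 y with hy | hy
  · exact key y hy
  · obtain ⟨c, hc⟩ := key (-y) (by linarith)
    exact ⟨-c, by rw [Odd.neg_pow (by decide), hc, neg_neg]⟩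

/-- A nonzero commutative flat product preserving an area form. -/
theorem comm_normal_form (hE : Module.finrank ℝ E = 2) (ω : E →ₗ[ℝ] E →ₗ[ℝ] ℝ)
    (alt : ∀ x, ω x x = 0) (L : E →ₗ[ℝ] E →ₗ[ℝ] E)
    (par : ∀ x y z, ω (L x y) z + ω y (L x z) = 0)
    (comm : ∀ x y, L x y = L y x)
    (flat : ∀ x y z, L x (L y z) = L y (L x z))
    {e f : E} (h : ω e f ≠ 0) (hL : ∃ x y, L x y ≠ 0) :
    ∃ f₁ f₂, ω f₁ f₂ = -1 ∧ IsNormalForm L f₁ f₂ := by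
  obtain ⟨p, q, hee⟩ := area_coords hE ω alt h (L e e)
  obtain ⟨r, s, hef⟩ := area_coords hE ω alt h (L e f)
  obtain ⟨u, v, hff⟩ := area_coords hE ω alt h (L f f)
  have hfe : L f e = r • e + s • f := by rw [comm, hef]
  obtain rfl := area_traceless ω alt h (L e) (par e e f) hee hef
  obtain rfl := area_traceless ω alt h (L f) (par f e f) hfe hff
  have h1 := flat e f e
  have h2 := flat e f f
  simp only [hee, hef, hfe, hff, map_add, map_smul] at h1 h2
  obtain ⟨h1a, h1b⟩ := area_indep ω alt h
    (s := r * p - p * r) (t := r * q + p * p) (s' := p * r + q * u) (t' := -(p * p) - q * r)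
    (by linear_combination (norm := module) h1)
  obtain ⟨h2a, h2b⟩ := area_indep ω alt h
    (s := u * p - r * r) (t := u * q + r * p) (s' := r * r - p * u) (t' := -(r * p) + p * r)
    (by linear_combination (norm := module) h2)
  -- It suffices to find `x` with `y = L x x` independent of `x` and annihilated by `L`.
  suffices H : ∃ x y, ω x y ≠ 0 ∧ L x x = y ∧ L x y = 0 ∧ L y y = 0 by
    obtain ⟨x, y, hxy, hxx, hxy0, hyy⟩ := H
    -- Replacing `x` by `c x` multiplies `ω x (L x x)` by `c ^ 3`.
    obtain ⟨c, hc⟩ : ∃ c : ℝ, c ^ 3 = - (ω x y)⁻¹ :=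
      exists_cube_root _
    refine ⟨c • x, c ^ 2 • y, ?_, Or.inl ⟨?_, ?_, ?_, ?_⟩⟩
    · simp only [map_smul, LinearMap.smul_apply, smul_eq_mul]
      have : c ^ 2 * (c * ω x y) = c ^ 3 * ω x y := by ring
      rw [this, hc]
      field_simp
    · simp only [map_smul, LinearMap.smul_apply, hxx, smul_smul, pow_two]
    · simp [hxy0]
    · simp [comm y x, hxy0]
    · simp [hyy]
  by_cases hq : q = 0
  · subst hq
    have hp : p = 0 := by nlinarith
    subst hp
    have hr : r = 0 := by nlinarith
    subst hr
    have hu : u ≠ 0 := by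
      rintro rfl
      obtain ⟨x, y, hxy⟩ := hL
      apply hxy
      obtain ⟨a, b, rfl⟩ := area_coords hE ω alt h x
      obtain ⟨c, d, rfl⟩ := area_coords hE ω alt h y
      simp [hee, hef, hfe, hff]
    refine ⟨f, u • e, ?_, ?_, ?_, ?_⟩
    · simpa [area_swap ω alt e f] using ⟨hu, h⟩
    · simp [hff]
    · simp [hfe]
    · simp [hee]
  · refine ⟨e, p • e + q • f, ?_, hee, ?_, ?_⟩
    · simpa [alt] using ⟨hq, h⟩
    · have e1 : p * p + q * r = 0 := by linarith
      simp only [hee, hef, map_add, map_smul]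
      linear_combination (norm := module) e1 • e
    · have e1 : p * p + q * r = 0 := by linarith
      have e2 : p * r + q * u = 0 := by linarith
      simp only [hee, hef, hfe, hff, map_add, map_smul, LinearMap.add_apply, LinearMap.smul_apply]
      linear_combination (norm := module) (p * e1 + q * e2) • e - (q * e1) • f

/-- Flatness constrains the structure constants of a traceless product with `L a b - L b a = b`: here
`L a a = p a + q b`, `L a b = r a - p b` and `L b b = u a - r b`. -/
theorem noncomm_coefficients {p q r u : ℝ} (h1 : r * (2 + p) + q * u = 0)
    (h2 : 2 * (r * q) + (p + 1) * (2 * p + 1) = 0) (h3 : (2 * p - 1) * u = 2 * r ^ 2) :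
    u = 0 ∧ r = 0 ∧ (p = -1 ∨ p = -1 / 2) := by
  have hu : u = 0 := by
    -- Eliminating `q` and `r` leaves `3 u = 0`.
    linear_combination (1 / 3) * (u * h2 - 2 * r * h1 - (p + 2) * h3)
  subst hu
  have hr : r = 0 := by nlinarith
  subst hr
  refine ⟨rfl, rfl, ?_⟩
  have : (p + 1) * (2 * p + 1) = 0 := by linarith
  rcases mul_eq_zero.1 this with h | h
  · left; linarith
  · right; linarith

/-- A flat product preserving an area form, in a frame with `L a b - L b a = b`. -/
theorem noncomm_normal_form (hE : Module.finrank ℝ E = 2) (ω : E →ₗ[ℝ] E →ₗ[ℝ] ℝ)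
    (alt : ∀ x, ω x x = 0) (L : E →ₗ[ℝ] E →ₗ[ℝ] E)
    (par : ∀ x y z, ω (L x y) z + ω y (L x z) = 0)
    (flat : ∀ x y z, L (L x y - L y x) z = L x (L y z) - L y (L x z))
    {a b : E} (h : ω a b ≠ 0) (hab : L a b - L b a = b) :
    ∃ f₁ f₂, ω f₁ f₂ = -1 ∧ IsNormalForm L f₁ f₂ := by
  obtain ⟨p, q, haa⟩ := area_coords hE ω alt h (L a a)
  obtain ⟨r, s, hab'⟩ := area_coords hE ω alt h (L a b)
  obtain ⟨u, v, hbb⟩ := area_coords hE ω alt h (L b b)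
  obtain rfl := area_traceless ω alt h (L a) (par a a b) haa hab'
  have hba : L b a = r • a + (-p - 1) • b := by
    linear_combination (norm := module) hab' - hab
  obtain rfl := area_traceless ω alt h (L b) (par b a b) hba hbb
  have h1 := flat a b a
  have h2 := flat a b b
  rw [hab] at h1 h2
  simp only [haa, hab', hba, hbb, map_add, map_smul] at h1 h2
  obtain ⟨h1a, h1b⟩ := area_indep ω alt h
    (s := r) (t := -p - 1) (s' := r * p + (-p - 1) * r - (p * r + q * u))
    (t' := r * q + (-p - 1) * (-p) - (p * (-p - 1) - q * r))
    (by linear_combination (norm := module) h1)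
  obtain ⟨h2a, h2b⟩ := area_indep ω alt h
    (s := u) (t := -r) (s' := u * p - r * r - (r * r - p * u))
    (t' := u * q + r * p - (r * (-p - 1) + p * r))
    (by linear_combination (norm := module) h2)
  obtain ⟨rfl, rfl, hp⟩ := noncomm_coefficients (p := p) (q := q) (r := r) (u := u)
    (by linarith) (by linarith) (by linarith)
  rcases hp with rfl | rfl
  · refine ⟨a - (q / 2) • b, (-(ω a b)⁻¹) • b, ?_, Or.inr (Or.inl ⟨?_, ?_, ?_, ?_⟩)⟩
    · simp [alt, h]
    all_goals
      simp only [haa, hab', hba, hbb, map_sub, map_smul, LinearMap.sub_apply,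
        LinearMap.smul_apply]
      module
  · refine ⟨a - (2 * q) • b, (-(ω a b)⁻¹) • b, ?_, Or.inr (Or.inr ⟨?_, ?_, ?_, ?_⟩)⟩
    · simp [alt, h]
    all_goals
      simp only [haa, hab', hba, hbb, map_sub, map_smul, LinearMap.sub_apply,
        LinearMap.smul_apply]
      module

/-- Classification of nonzero flat torsion-free products on a plane preserving an area form; the
Lie bracket is the commutator of `L`. -/
theorem exists_normal_form (hE : Module.finrank ℝ E = 2) (ω : E →ₗ[ℝ] E →ₗ[ℝ] ℝ)
    (alt : ∀ x, ω x x = 0) (nd : ∀ x, (∀ y, ω x y = 0) → x = 0) (L : E →ₗ[ℝ] E →ₗ[ℝ] E)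
    (par : ∀ x y z, ω (L x y) z + ω y (L x z) = 0)
    (flat : ∀ x y z, L (L x y - L y x) z = L x (L y z) - L y (L x z))
    (hL : ∃ x y, L x y ≠ 0) :
    ∃ f₁ f₂, ω f₁ f₂ = -1 ∧ IsNormalForm L f₁ f₂ := by
  by_cases hc : ∀ x y, L x y = L y x
  · obtain ⟨x, y, hxy⟩ := hL
    obtain ⟨f, hf⟩ : ∃ f, ω (L x y) f ≠ 0 := by
      by_contra! hcon
      exact hxy (nd _ hcon)
    refine comm_normal_form hE ω alt L par hc (fun x y z => ?_) hf ⟨x, y, hxy⟩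
    have := flat x y z
    rw [hc x y, sub_self, map_zero, LinearMap.zero_apply] at this
    exact (sub_eq_zero.1 this.symm)
  · push Not at hc
    obtain ⟨e, f, hef⟩ := hc
    set b := L e f - L f e with hb
    have hb0 : b ≠ 0 := sub_ne_zero.2 hef
    obtain ⟨g, hg⟩ : ∃ g, ω b g ≠ 0 := by
      by_contra! hcon
      exact hb0 (nd _ hcon)
    have hw : ω e f ≠ 0 := by
      intro hw
      -- If `e, f` were dependent, their commutator would vanish.
      by_cases he : e = 0
      · subst he
        simp at hef
      obtain ⟨k, hk⟩ : ∃ k, ω e k ≠ 0 := by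
        by_contra! hcon
        exact he (nd _ hcon)
      obtain ⟨s, t, rfl⟩ := area_coords hE ω alt hk f
      simp only [map_add, map_smul, alt, smul_eq_mul, mul_zero, zero_add] at hw
      rcases mul_eq_zero.1 hw with rfl | h
      · simp at hef
      · exact hk h
    -- In a plane the commutator of `x, y` is `ω x y / ω e f` times that of `e, f`.
    have hcomm : ∀ x y, ω e f • (L x y - L y x) = ω x y • b := by
      intro x y
      obtain ⟨x1, x2, rfl⟩ := area_coords hE ω alt hw x
      obtain ⟨y1, y2, rfl⟩ := area_coords hE ω alt hw y
      rw [hb]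
      simp only [map_add, map_smul, LinearMap.add_apply, LinearMap.smul_apply, alt, smul_eq_mul,
        area_swap ω alt e f]
      module
    -- The multiple of `g` chosen so that `ω a b = ω e f`, whence `[a, b] = b`.
    have hab : ω ((-(ω e f / ω b g)) • g) b = ω e f := by
      simp only [map_smul, LinearMap.smul_apply, smul_eq_mul, area_swap ω alt b g]
      field_simp
    refine noncomm_normal_form hE ω alt L par flat
      (a := (-(ω e f / ω b g)) • g) (b := b) (by rw [hab]; exact hw) ?_
    have := hcomm ((-(ω e f / ω b g)) • g) b
    rw [hab] at this
    exact smul_right_injective E hw this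

end Plane

/-! ### Reduction of the complex symplectic structure -/


/-- A non-abelian four-dimensional semidirect product
`𝔥 = 𝔤 ⋉_γ V` (with `dim 𝔤 = dim V = 2`) carrying a special Lagrangian complex
symplectic structure `(J, Ω)` admits a basis `f₁, f₂ ∈ 𝔤`, `f₃, f₄ ∈ V` with
`Jf₁ = f₃`, `Jf₂ = f₄`, `Ω(f₁,f₄) = −1`, `Ω(f₂,f₃) = 1`, all other pairings of
basis vectors zero, whose bracket table is exactly one of three model lists. -/
theorem stmt18 {𝔤 V : Type*} [LieRing 𝔤] [LieAlgebra ℝ 𝔤]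
    [AddCommGroup V] [Module ℝ V]
    [FiniteDimensional ℝ 𝔤] [FiniteDimensional ℝ V]
    (hdim𝔤 : Module.finrank ℝ 𝔤 = 2) (hdimV : Module.finrank ℝ V = 2)
    (γ : 𝔤 →ₗ[ℝ] Module.End ℝ V)
    (hflat : ∀ x y, γ ⁅x, y⁆ = γ x * γ y - γ y * γ x)
    (J : (𝔤 × V) →ₗ[ℝ] 𝔤 × V) (hJ : ∀ a, J (J a) = -a)
    (hint : ∀ a b, sdBracket γ (J a) (J b) =
      sdBracket γ a b + J (sdBracket γ (J a) b) + J (sdBracket γ a (J b)))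
    (htr1 : ∀ x : 𝔤, (J (x, 0)).1 = 0)
    (htr2 : ∀ u : V, (J (0, u)).2 = 0)
    (Ω : (𝔤 × V) →ₗ[ℝ] (𝔤 × V) →ₗ[ℝ] ℝ)
    (halt : ∀ a, Ω a a = 0)
    (hclosed : ∀ a b c, Ω (sdBracket γ a b) c + Ω (sdBracket γ b c) a +
      Ω (sdBracket γ c a) b = 0)
    (hnd : ∀ a, (∀ b, Ω a b = 0) → a = 0)
    (hJsym : ∀ a b, Ω (J a) b = Ω a (J b))
    (hLag1 : ∀ x y : 𝔤, Ω (x, 0) (y, 0) = 0)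
    (hLag2 : ∀ u v : V, Ω (0, u) (0, v) = 0)
    (hnonab : ∃ a b, sdBracket γ a b ≠ 0) :
    ∃ (f₁ f₂ : 𝔤) (f₃ f₄ : V),
      LinearIndependent ℝ
        ![((f₁, 0) : 𝔤 × V), (f₂, 0), (0, f₃), (0, f₄)] ∧
      Submodule.span ℝ
        ({(f₁, 0), (f₂, 0), (0, f₃), (0, f₄)} : Set (𝔤 × V)) = ⊤ ∧
      J (f₁, 0) = (0, f₃) ∧ J (f₂, 0) = (0, f₄) ∧
      Ω (f₁, 0) (0, f₄) = -1 ∧ Ω (f₂, 0) (0, f₃) = 1 ∧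
      Ω (f₁, 0) (f₂, 0) = 0 ∧ Ω (f₁, 0) (0, f₃) = 0 ∧
      Ω (f₂, 0) (0, f₄) = 0 ∧ Ω ((0 : 𝔤), f₃) (0, f₄) = 0 ∧
      -- the bracket table is exactly one of the following three lists
      ((sdBracket γ (f₁, 0) (f₂, 0) = 0 ∧
        sdBracket γ (f₁, 0) (0, f₃) = (0, f₄) ∧
        sdBracket γ (f₁, 0) (0, f₄) = 0 ∧
        sdBracket γ (f₂, 0) (0, f₃) = 0 ∧
        sdBracket γ (f₂, 0) (0, f₄) = 0 ∧
        sdBracket γ ((0 : 𝔤), f₃) (0, f₄) = 0) ∨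
       (sdBracket γ (f₁, 0) (f₂, 0) = (f₂, 0) ∧
        sdBracket γ (f₁, 0) (0, f₃) = -(0, f₃) ∧
        sdBracket γ (f₁, 0) (0, f₄) = (0, f₄) ∧
        sdBracket γ (f₂, 0) (0, f₃) = 0 ∧
        sdBracket γ (f₂, 0) (0, f₄) = 0 ∧
        sdBracket γ ((0 : 𝔤), f₃) (0, f₄) = 0) ∨
       (sdBracket γ (f₁, 0) (f₂, 0) = (f₂, 0) ∧
        sdBracket γ (f₁, 0) (0, f₃) = -(1 / 2 : ℝ) • ((0 : 𝔤), f₃) ∧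
        sdBracket γ (f₁, 0) (0, f₄) = (1 / 2 : ℝ) • ((0 : 𝔤), f₄) ∧
        sdBracket γ (f₂, 0) (0, f₃) = -(1 / 2 : ℝ) • ((0 : 𝔤), f₄) ∧
        sdBracket γ (f₂, 0) (0, f₄) = 0 ∧
        sdBracket γ ((0 : 𝔤), f₃) (0, f₄) = 0)) := by
  -- `φ` and `-ψ` are the mutually inverse identifications of `𝔤` with `V` given by `J`.
  let φ : 𝔤 →ₗ[ℝ] V := LinearMap.snd ℝ 𝔤 V ∘ₗ J ∘ₗ LinearMap.inl ℝ 𝔤 V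
  let ψ : V →ₗ[ℝ] 𝔤 := LinearMap.fst ℝ 𝔤 V ∘ₗ J ∘ₗ LinearMap.inr ℝ 𝔤 V
  have hφ : ∀ x, J (x, 0) = (0, φ x) := fun x => Prod.ext (htr1 x) rfl
  have hψ : ∀ u, J (0, u) = (ψ u, 0) := fun u => Prod.ext rfl (htr2 u)
  have hψφ : ∀ x, ψ (φ x) = -x := fun x => by
    have := hJ (x, 0)
    rw [hφ, hψ] at this
    exact congrArg Prod.fst this
  have hφψ : ∀ u, φ (ψ u) = -u := fun u => by
    have := hJ (0, u)
    rw [hψ, hφ] at this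
    exact congrArg Prod.snd this
  have hinj : Function.Injective φ := fun x y hxy => by
    have := congrArg ψ hxy
    rw [hψφ, hψφ] at this
    exact neg_injective this
  let L : 𝔤 →ₗ[ℝ] 𝔤 →ₗ[ℝ] 𝔤 := LinearMap.mk₂ ℝ (fun x y => -ψ (γ x (φ y)))
    (by intros; simp [add_comm]) (by intros; simp) (by intros; simp [add_comm]) (by intros; simp)
  have hLdef : ∀ x y, φ (L x y) = γ x (φ y) := fun x y => by
    change φ (-ψ (γ x (φ y))) = _
    rw [map_neg, hφψ, neg_neg]
  let ω : 𝔤 →ₗ[ℝ] 𝔤 →ₗ[ℝ] ℝ :=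
    Ω.compl₁₂ (LinearMap.inl ℝ 𝔤 V) (LinearMap.inr ℝ 𝔤 V ∘ₗ φ)
  have hω : ∀ x y, Ω (x, 0) (0, φ y) = ω x y := fun _ _ => rfl
  have hswap := area_swap Ω halt
  have hω' : ∀ x y, Ω (0, φ y) (x, 0) = - ω x y := fun x y => by rw [hswap, hω]
  have alt : ∀ x, ω x x = 0 := fun x => by
    have := hJsym (x, 0) (x, 0)
    rw [hφ, hω', hω] at this
    linarith
  have nd : ∀ x, (∀ y, ω x y = 0) → x = 0 := fun x hx => by
    have := hnd (x, 0) (fun ⟨y, v⟩ => by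
      have e : ((y, v) : 𝔤 × V) = (y, 0) + (0, φ (-ψ v)) := by simp [hφψ]
      rw [e, map_add, hLag1, hω, hx, add_zero])
    exact congrArg Prod.fst this
  have torsion : ∀ x y, ⁅x, y⁆ = L x y - L y x := fun x y => by
    have := congrArg Prod.fst (hint (x, 0) (y, 0))
    have e1 : γ y (φ x) = φ (L y x) := (hLdef y x).symm
    have e2 : γ x (φ y) = φ (L x y) := (hLdef x y).symm
    simp only [hφ, sdBracket, zero_lie, lie_zero, map_zero, LinearMap.zero_apply, sub_zero,
      zero_sub, e1, e2, ← map_neg, hψ, hψφ, Prod.fst_add, neg_neg] at this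
    rw [map_neg] at this
    linear_combination (norm := module) -this
  have flat : ∀ x y z, L (L x y - L y x) z = L x (L y z) - L y (L x z) := fun x y z => by
    apply hinj
    rw [map_sub φ, hLdef, hLdef, hLdef, hLdef, hLdef, ← torsion, hflat]
    rfl
  -- Closedness makes `∇ω` symmetric in its first two arguments.
  have closed : ∀ x y z, ω (L x y - L y x) z - ω x (L y z) + ω y (L x z) = 0 := fun x y z => by
    have := hclosed (x, 0) (y, 0) (0, φ z)
    simp only [sdBracket, map_zero, LinearMap.zero_apply, sub_zero, zero_sub, ← hLdef,
      ← map_neg, hω', hω, torsion] at this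
    simp only [map_neg] at this
    linarith
  have sw := area_swap ω alt
  have par : ∀ x y z, ω (L x y) z + ω y (L x z) = 0 := fun x y z => by
    have c1 := closed x y z
    have c2 := closed y z x
    have c3 := closed z x y
    simp only [map_sub, LinearMap.sub_apply] at c1 c2 c3
    linarith [sw (L x y) z, sw (L y x) z, sw (L y z) x, sw (L z y) x, sw (L z x) y,
      sw (L x z) y]
  have hL : ∃ x y, L x y ≠ 0 := by
    by_contra! h0
    obtain ⟨⟨x, u⟩, ⟨y, v⟩, hne⟩ := hnonab
    have hγ : ∀ x v, γ x v = 0 := fun x v => by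
      have := hLdef x (-ψ v)
      rw [h0, map_zero, map_neg, hφψ, neg_neg] at this
      exact this.symm
    apply hne
    simp [sdBracket, torsion, h0, hγ]
  obtain ⟨f₁, f₂, h12, hN⟩ := exists_normal_form hdim𝔤 ω alt nd L par flat hL
  have h21 : ω f₂ f₁ = 1 := by rw [sw f₁ f₂, h12, neg_neg]
  have hne : ω f₁ f₂ ≠ 0 := by rw [h12]; norm_num
  have hind : LinearIndependent ℝ
      ![((f₁, 0) : 𝔤 × V), (f₂, 0), (0, φ f₁), (0, φ f₂)] := by
    rw [Fintype.linearIndependent_iff]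
    intro g hg
    simp only [Fin.sum_univ_four, Matrix.cons_val] at hg
    have g1 := congrArg Prod.fst hg
    have g2 := congrArg Prod.snd hg
    simp only [Prod.fst_add, Prod.snd_add, Prod.smul_fst, Prod.smul_snd, smul_zero, add_zero,
      zero_add, Prod.fst_zero, Prod.snd_zero] at g1 g2
    rw [← map_smul, ← map_smul, ← map_add] at g2
    have g3 := hinj (g2.trans (map_zero φ).symm)
    obtain ⟨a, b⟩ := area_indep ω alt hne (s' := 0) (t' := 0) (by simpa using g1)
    obtain ⟨c, d⟩ := area_indep ω alt hne (s' := 0) (t' := 0) (by simpa using g3)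
    intro i
    fin_cases i <;> assumption
  have hspan : Submodule.span ℝ
      ({(f₁, 0), (f₂, 0), (0, φ f₁), (0, φ f₂)} : Set (𝔤 × V)) = ⊤ := by
    have := hind.span_eq_top_of_card_eq_finrank (by simp [hdim𝔤, hdimV])
    rw [← this]
    congr 1
    simp only [Matrix.range_cons, Matrix.range_empty, Set.union_empty, Set.singleton_union]
  refine ⟨f₁, f₂, φ f₁, φ f₂, hind, hspan, hφ _, hφ _, h12, h21, hLag1 _ _, alt _, alt _,
    hLag2 _ _, ?_⟩
  rcases hN with ⟨a, b, c, d⟩ | ⟨a, b, c, d⟩ | ⟨a, b, c, d⟩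
  · left
    simp [sdBracket, torsion, ← hLdef, a, b, c, d]
  · right; left
    simp [sdBracket, torsion, ← hLdef, a, b, c, d]
  · right; right
    have e : (1 / 2 : ℝ) • f₂ - -(1 / 2 : ℝ) • f₂ = f₂ := by module
    simp only [sdBracket, torsion, ← hLdef, a, b, c, d, e]
    simp
end
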